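/- Let c ∈ ℝ, σ ∈ M_n(ℂ) constant, τ : ℝ → M_n(ℂ) continuous, and let g : ℝ² → GL(n,ℂ) be a twice continuously differentiable solution of the generalized Maxwell–Bloch equation ∂_t((∂_t g)·g⁻¹) + c·∂_x((∂_t g)·g⁻¹) = [σ, g·τ(x)·g⁻¹]. Fix x₀ ∈ ℝ and a constant matrix ξ ∈ M_n(ℂ) commuting with τ(x₀). Then the pointwise quantity t ↦ Tr( ( g⁻¹·(∂_t g) + c·g⁻¹·(∂_x g) )(t, x₀) · ξ ) is constant in t. (These are the Noether conserved quantities associated with the right action of the torus centralizing τ; the combination g⁻¹g_t + c·g⁻¹g_x is the one whose centralizer component is exactly conserved.) -/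

import Mathlib

/-!
Write `A = g_t g⁻¹` and `Q = g⁻¹ g_t + c g⁻¹ g_x`. Since mixed partials of `g` commute,
`∂_t (g⁻¹ g_t) = g⁻¹ (∂_t A) g` and `∂_t (g⁻¹ g_x) = g⁻¹ (∂_x A) g`, so the equation gives
`∂_t Q = g⁻¹ [σ, g τ g⁻¹] g = [g⁻¹ σ g, τ]`. By cyclicity of the trace,
`Tr ([S, τ] ξ) = Tr (S [τ, ξ]) = 0` when `ξ` commutes with `τ`; hence `Tr (Q ξ)` has zero
derivative in `t`.

Derivatives of products and inverses are taken in the normed algebra of matrices with the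
`ℓ^∞` operator norm; `hasDerivAt_matrix_iff` translates to the entrywise derivatives.
-/

open Matrix

/-- Partial derivative in `t` (entrywise) of a matrix-valued function of `(t, x)`. -/
noncomputable def mdt {n : ℕ} (M : ℝ → ℝ → Matrix (Fin n) (Fin n) ℂ) :
    ℝ → ℝ → Matrix (Fin n) (Fin n) ℂ :=
  fun t x => Matrix.of fun i j => deriv (fun s => M s x i j) t

/-- Partial derivative in `x` (entrywise) of a matrix-valued function of `(t, x)`. -/
noncomputable def mdx {n : ℕ} (M : ℝ → ℝ → Matrix (Fin n) (Fin n) ℂ) :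
    ℝ → ℝ → Matrix (Fin n) (Fin n) ℂ :=
  fun t x => Matrix.of fun i j => deriv (fun s => M t s i j) x

section MatrixCalculus

attribute [local instance] Matrix.linftyOpNormedAddCommGroup Matrix.linftyOpNormedSpace
  Matrix.linftyOpNormedRing Matrix.linftyOpNormedAlgebra

lemma hasDerivAt_matrix_iff {n : ℕ} {F : ℝ → Matrix (Fin n) (Fin n) ℂ}
    {F' : Matrix (Fin n) (Fin n) ℂ} {t : ℝ} :
    HasDerivAt F F' t ↔ ∀ i j, HasDerivAt (fun s => F s i j) (F' i j) t := by
  constructor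
  · intro h i j
    let e : Matrix (Fin n) (Fin n) ℂ →ₗ[ℝ] ℂ := Matrix.entryLinearMap ℝ ℂ i j
    exact (LinearMap.toContinuousLinearMap e).hasFDerivAt.comp_hasDerivAt t h
  · intro h
    -- reassemble the matrix from its entries as a sum of continuous linear images
    let L : Fin n → Fin n → (ℂ →L[ℝ] Matrix (Fin n) (Fin n) ℂ) := fun i j =>
      LinearMap.toContinuousLinearMap (Matrix.singleLinearMap ℝ i j)
    have hs : HasDerivAt (fun s => ∑ i, ∑ j, L i j (F s i j)) (∑ i, ∑ j, L i j (F' i j)) t :=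
      HasDerivAt.fun_sum fun i _ => HasDerivAt.fun_sum fun j _ =>
        (L i j).hasFDerivAt.comp_hasDerivAt t (h i j)
    have e : ∀ M : Matrix (Fin n) (Fin n) ℂ, ∑ i, ∑ j, L i j (M i j) = M := fun M =>
      (Matrix.matrix_eq_sum_single M).symm
    simpa only [e] using hs

lemma hasDerivAt_matrix_inv {n : ℕ} {F : ℝ → Matrix (Fin n) (Fin n) ℂ}
    {F' : Matrix (Fin n) (Fin n) ℂ} {t : ℝ} (h : HasDerivAt F F' t) (hu : IsUnit (F t)) :
    HasDerivAt (fun s => (F s)⁻¹) (-((F t)⁻¹ * F' * (F t)⁻¹)) t := by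
  have : CompleteSpace (Matrix (Fin n) (Fin n) ℂ) := FiniteDimensional.complete ℝ _
  obtain ⟨u, hu⟩ := hu
  have h1 := hasFDerivAt_ringInverse (𝕜 := ℝ) u
  rw [hu] at h1
  have h2 := h1.comp_hasDerivAt t h
  have h3 : ((u⁻¹ : (Matrix (Fin n) (Fin n) ℂ)ˣ) : Matrix (Fin n) (Fin n) ℂ) = (F t)⁻¹ := by
    rw [← hu, Matrix.coe_units_inv]
  simp only [Function.comp_def, h3, ← Matrix.nonsing_inv_eq_ringInverse] at h2
  exact h2

lemma mdt_eq_of_hasDerivAt {n : ℕ} {M : ℝ → ℝ → Matrix (Fin n) (Fin n) ℂ}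
    {M' : Matrix (Fin n) (Fin n) ℂ} {t x : ℝ} (h : HasDerivAt (fun s => M s x) M' t) :
    mdt M t x = M' := by
  ext i j
  exact (hasDerivAt_matrix_iff.1 h i j).deriv

lemma mdx_eq_of_hasDerivAt {n : ℕ} {M : ℝ → ℝ → Matrix (Fin n) (Fin n) ℂ}
    {M' : Matrix (Fin n) (Fin n) ℂ} {t x : ℝ} (h : HasDerivAt (fun s => M t s) M' x) :
    mdx M t x = M' := by
  ext i j
  exact (hasDerivAt_matrix_iff.1 h i j).deriv

lemma hasDerivAt_slice_fst {E : Type*} [NormedAddCommGroup E] [NormedSpace ℝ E]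
    {f : ℝ × ℝ → E} (hf : Differentiable ℝ f) (t x : ℝ) :
    HasDerivAt (fun s => f (s, x)) (fderiv ℝ f (t, x) (1, 0)) t :=
  (hf (t, x)).hasFDerivAt.comp_hasDerivAt t ((hasDerivAt_id t).prodMk (hasDerivAt_const t x))

lemma hasDerivAt_slice_snd {E : Type*} [NormedAddCommGroup E] [NormedSpace ℝ E]
    {f : ℝ × ℝ → E} (hf : Differentiable ℝ f) (t x : ℝ) :
    HasDerivAt (fun s => f (t, s)) (fderiv ℝ f (t, x) (0, 1)) x :=
  (hf (t, x)).hasFDerivAt.comp_hasDerivAt x ((hasDerivAt_const x t).prodMk (hasDerivAt_id x))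

/-- First and second partial derivatives of a `C²` matrix function. The same matrix `gtx` serves
as `∂_x ∂_t g` and `∂_t ∂_x g`: this is the symmetry of second derivatives. -/
lemma exists_partials {n : ℕ} {g : ℝ → ℝ → Matrix (Fin n) (Fin n) ℂ}
    (hg : ∀ i j, ContDiff ℝ 2 fun p : ℝ × ℝ => g p.1 p.2 i j) (t x : ℝ) :
    HasDerivAt (fun s => g s x) (mdt g t x) t ∧
    HasDerivAt (fun s => g t s) (mdx g t x) x ∧
    ∃ gtt gtx : Matrix (Fin n) (Fin n) ℂ,
      HasDerivAt (fun s => mdt g s x) gtt t ∧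
      HasDerivAt (fun s => mdt g t s) gtx x ∧
      HasDerivAt (fun s => mdx g s x) gtx t := by
  let f : Fin n → Fin n → ℝ × ℝ → ℂ := fun i j p => g p.1 p.2 i j
  have hd : ∀ i j, Differentiable ℝ (f i j) := fun i j => (hg i j).differentiable (by norm_num)
  have hd2 : ∀ i j, Differentiable ℝ (fderiv ℝ (f i j)) := fun i j =>
    ((hg i j).fderiv_right (m := 1) (by norm_num)).differentiable (by norm_num)
  have et : ∀ t x i j, mdt g t x i j = fderiv ℝ (f i j) (t, x) (1, 0) := fun t x i j =>
    (hasDerivAt_slice_fst (hd i j) t x).deriv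
  have ex : ∀ t x i j, mdx g t x i j = fderiv ℝ (f i j) (t, x) (0, 1) := fun t x i j =>
    (hasDerivAt_slice_snd (hd i j) t x).deriv
  refine ⟨hasDerivAt_matrix_iff.2 fun i j => ?_, hasDerivAt_matrix_iff.2 fun i j => ?_,
    Matrix.of fun i j => fderiv ℝ (fderiv ℝ (f i j)) (t, x) (1, 0) (1, 0),
    Matrix.of fun i j => fderiv ℝ (fderiv ℝ (f i j)) (t, x) (0, 1) (1, 0),
    hasDerivAt_matrix_iff.2 fun i j => ?_, hasDerivAt_matrix_iff.2 fun i j => ?_,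
    hasDerivAt_matrix_iff.2 fun i j => ?_⟩
  · rw [et]
    exact hasDerivAt_slice_fst (hd i j) t x
  · rw [ex]
    exact hasDerivAt_slice_snd (hd i j) t x
  · simp only [et, Matrix.of_apply]
    simpa using (hasDerivAt_slice_fst (hd2 i j) t x).clm_apply
      (hasDerivAt_const t ((1, 0) : ℝ × ℝ))
  · simp only [et, Matrix.of_apply]
    simpa using (hasDerivAt_slice_snd (hd2 i j) t x).clm_apply
      (hasDerivAt_const x ((1, 0) : ℝ × ℝ))
  · simp only [ex, Matrix.of_apply]
    have hsymm : IsSymmSndFDerivAt ℝ (f i j) (t, x) :=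
      (hg i j).contDiffAt.isSymmSndFDerivAt (by simp)
    rw [hsymm.eq (0, 1) (1, 0)]
    simpa using (hasDerivAt_slice_fst (hd2 i j) t x).clm_apply
      (hasDerivAt_const t ((0, 1) : ℝ × ℝ))

/-- The key identity `∂_t (g⁻¹ g_t + c g⁻¹ g_x) = g⁻¹ (∂_t A + c ∂_x A) g` with
`A = g_t g⁻¹`. -/
lemma hasDerivAt_current {n : ℕ} (c : ℝ) {g : ℝ → ℝ → Matrix (Fin n) (Fin n) ℂ}
    (hg : ∀ i j, ContDiff ℝ 2 fun p : ℝ × ℝ => g p.1 p.2 i j)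
    (hginv : ∀ t x, IsUnit (g t x)) (t x : ℝ) :
    HasDerivAt (fun s => (g s x)⁻¹ * mdt g s x + (c : ℂ) • ((g s x)⁻¹ * mdx g s x))
      ((g t x)⁻¹ * (mdt (fun t x => mdt g t x * (g t x)⁻¹) t x
        + (c : ℂ) • mdx (fun t x => mdt g t x * (g t x)⁻¹) t x) * g t x) t := by
  obtain ⟨ht, hx, gtt, gtx, htt, htx, hxt⟩ := exists_partials hg t x
  have hit := hasDerivAt_matrix_inv ht (hginv t x)
  have hix := hasDerivAt_matrix_inv hx (hginv t x)
  have hAt := mdt_eq_of_hasDerivAt (M := fun t x => mdt g t x * (g t x)⁻¹) (htt.mul hit)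
  have hAx := mdx_eq_of_hasDerivAt (M := fun t x => mdt g t x * (g t x)⁻¹) (htx.mul hix)
  have hinv : (g t x)⁻¹ * g t x = 1 :=
    Matrix.nonsing_inv_mul _ ((Matrix.isUnit_iff_isUnit_det _).1 (hginv t x))
  have hQ := (hit.mul htt).add ((hit.mul hxt).const_smul (c : ℂ))
  rw [hAt, hAx]
  refine hQ.congr_deriv ?_
  simp only [mul_add, add_mul, mul_neg, neg_mul, mul_assoc, hinv, mul_one, smul_add, smul_neg,
    Matrix.mul_smul, Matrix.smul_mul]
  abel

/-- `Tr (g⁻¹ [σ, g τ g⁻¹] g ξ) = Tr (g⁻¹ σ g [τ, ξ]) = 0` when `ξ` commutes with `τ`. -/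
lemma trace_conj_commutator_mul_eq_zero {n : ℕ} {G σ T ξ : Matrix (Fin n) (Fin n) ℂ}
    (hG : IsUnit G) (hξ : ξ * T = T * ξ) :
    (G⁻¹ * (σ * (G * T * G⁻¹) - (G * T * G⁻¹) * σ) * G * ξ).trace = 0 := by
  have hinv : G⁻¹ * G = 1 :=
    Matrix.nonsing_inv_mul _ ((Matrix.isUnit_iff_isUnit_det _).1 hG)
  have h1 : G⁻¹ * (σ * (G * T * G⁻¹) - (G * T * G⁻¹) * σ) * G * ξ
      = (G⁻¹ * σ * G) * (T * ξ) - T * ((G⁻¹ * σ * G) * ξ) := by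
    have e1 : G⁻¹ * (σ * (G * T * G⁻¹)) * G * ξ = (G⁻¹ * σ * G) * T * (G⁻¹ * G) * ξ := by
      simp only [mul_assoc]
    have e2 : G⁻¹ * ((G * T * G⁻¹) * σ) * G * ξ
        = (G⁻¹ * G) * T * ((G⁻¹ * σ * G) * ξ) := by
      simp only [mul_assoc]
    rw [mul_sub, sub_mul, sub_mul, e1, e2, hinv, mul_one, one_mul, mul_assoc _ T ξ]
  rw [h1, Matrix.trace_sub, Matrix.trace_mul_comm T, mul_assoc _ ξ T, hξ, sub_self]

lemma hasDerivAt_trace_mul {n : ℕ} {F : ℝ → Matrix (Fin n) (Fin n) ℂ}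
    {F' : Matrix (Fin n) (Fin n) ℂ} {t : ℝ} (h : HasDerivAt F F' t)
    (ξ : Matrix (Fin n) (Fin n) ℂ) :
    HasDerivAt (fun s => (F s * ξ).trace) (F' * ξ).trace t :=
  (LinearMap.toContinuousLinearMap (Matrix.traceLinearMap (Fin n) ℝ ℂ)).hasFDerivAt.comp_hasDerivAt
    t (h.mul_const ξ)

lemma hasDerivAt_trace_current {n : ℕ} (c : ℝ) {g : ℝ → ℝ → Matrix (Fin n) (Fin n) ℂ}
    (hg : ∀ i j, ContDiff ℝ 2 fun p : ℝ × ℝ => g p.1 p.2 i j)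
    (hginv : ∀ t x, IsUnit (g t x)) (t x : ℝ) (ξ : Matrix (Fin n) (Fin n) ℂ) :
    HasDerivAt
      (fun s => (((g s x)⁻¹ * mdt g s x + (c : ℂ) • ((g s x)⁻¹ * mdx g s x)) * ξ).trace)
      ((g t x)⁻¹ * (mdt (fun t x => mdt g t x * (g t x)⁻¹) t x
        + (c : ℂ) • mdx (fun t x => mdt g t x * (g t x)⁻¹) t x) * g t x * ξ).trace t :=
  hasDerivAt_trace_mul (hasDerivAt_current c hg hginv t x) ξ

end MatrixCalculus

theorem MBN_pointwise_noether_conservation {n : ℕ} (c : ℝ)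
    (σ : Matrix (Fin n) (Fin n) ℂ)
    (τ : ℝ → Matrix (Fin n) (Fin n) ℂ)
    (hτ : ∀ i j, Continuous fun x => τ x i j)
    (g : ℝ → ℝ → Matrix (Fin n) (Fin n) ℂ)
    (hg : ∀ i j, ContDiff ℝ 2 fun p : ℝ × ℝ => g p.1 p.2 i j)
    (hginv : ∀ t x, IsUnit (g t x))
    (hMBN : ∀ t x, mdt (fun t x => mdt g t x * (g t x)⁻¹) t x
        + (c : ℂ) • mdx (fun t x => mdt g t x * (g t x)⁻¹) t x
      = σ * (g t x * τ x * (g t x)⁻¹) - (g t x * τ x * (g t x)⁻¹) * σ)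
    (x₀ : ℝ) (ξ : Matrix (Fin n) (Fin n) ℂ) (hξ : ξ * τ x₀ = τ x₀ * ξ) :
    ∀ t₁ t₂ : ℝ,
      (((g t₁ x₀)⁻¹ * mdt g t₁ x₀ + (c : ℂ) • ((g t₁ x₀)⁻¹ * mdx g t₁ x₀)) * ξ).trace
      = (((g t₂ x₀)⁻¹ * mdt g t₂ x₀ + (c : ℂ) • ((g t₂ x₀)⁻¹ * mdx g t₂ x₀)) * ξ).trace := by
  have h : ∀ t, HasDerivAt (fun s => (((g s x₀)⁻¹ * mdt g s x₀
      + (c : ℂ) • ((g s x₀)⁻¹ * mdx g s x₀)) * ξ).trace) 0 t := by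
    intro t
    have h := hasDerivAt_trace_current c hg hginv t x₀ ξ
    rwa [hMBN, trace_conj_commutator_mul_eq_zero (hginv t x₀) hξ] at h
  exact is_const_of_deriv_eq_zero (fun t => (h t).differentiableAt) fun t => (h t).deriv
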